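/- Let S_1, …, S_k be bounded linear operators on H each admitting an A-adjoint, and let n ≥ 1 be an integer. Then ω_A( Σ_{i=1}^k S_i )^{4n} ≤ (k^{4n−1}/4) · [ ‖ Σ_{i=1}^k ( (S_i^{♯_A} S_i)^{2n} + (S_i S_i^{♯_A})^{2n} ) ‖_A + 2 Σ_{i=1}^k ω_A( (S_i^{♯_A} S_i)^{n} (S_i S_i^{♯_A})^{n} ) ]. -/

import Mathlib

noncomputable section

open ContinuousLinearMap

variable {H : Type*} [NormedAddCommGroup H] [InnerProductSpace ℂ H] [CompleteSpace H]

/-- The semi-inner product induced by the positive operator `A`: `⟨x, y⟩_A := ⟨A x, y⟩`. -/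
def innA (A : H →L[ℂ] H) (x y : H) : ℂ := inner ℂ (A x) y

/-- The seminorm induced by `A`: `‖x‖_A := ⟨x, x⟩_A ^ (1/2)`. -/
def vnormA (A : H →L[ℂ] H) (x : H) : ℝ := Real.sqrt (innA A x x).re

/-- The `A`-operator seminorm: `‖T‖_A := sup {‖T x‖_A : ‖x‖_A = 1}`. -/
def opNormA (A T : H →L[ℂ] H) : ℝ :=
  sSup {c : ℝ | ∃ x : H, vnormA A x = 1 ∧ c = vnormA A (T x)}

/-- The `A`-numerical radius: `ω_A(T) := sup {|⟨T x, x⟩_A| : ‖x‖_A = 1}`. -/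
def wA (A T : H →L[ℂ] H) : ℝ :=
  sSup {c : ℝ | ∃ x : H, vnormA A x = 1 ∧ c = ‖innA A (T x) x‖}

/-- `T` admits an `A`-adjoint: there is a bounded operator `X` with `A X = T* A`. -/
def HasAAdjoint (A T : H →L[ℂ] H) : Prop :=
  ∃ X : H →L[ℂ] H, A ∘L X = adjoint T ∘L A

/-- `X` is the reduced `A`-adjoint `T^{♯_A}` of `T`: it solves `A X = T* A` and its range
is contained in the closure of the range of `A`. -/
def IsReducedAAdjoint (A T X : H →L[ℂ] H) : Prop :=
  (A ∘L X = adjoint T ∘L A) ∧ ∀ y : H, X y ∈ closure (Set.range A)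

set_option linter.unusedSectionVars false

/-- `X` is an adjoint of `T` for the semi-inner product `innA A`. -/
def IsAdjA (A T X : H →L[ℂ] H) : Prop :=
  ∀ x y : H, innA A (T x) y = innA A x (X y)

theorem innA_conj {A : H →L[ℂ] H} (hA : A.IsPositive) (x y : H) :
    starRingEnd ℂ (innA A x y) = innA A y x := by
  unfold innA
  rw [inner_conj_symm]
  exact (hA.isSymmetric y x).symm

theorem exists_innA_eq_inner {A : H →L[ℂ] H} (hA : A.IsPositive) :
    ∃ B : H →L[ℂ] H, (∀ x y, innA A x y = inner ℂ (B x) (B y)) ∧ ∀ x, vnormA A x = ‖B x‖ := by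
  obtain ⟨B, hB⟩ := CStarAlgebra.nonneg_iff_eq_star_mul_self.mp
    ((ContinuousLinearMap.nonneg_iff_isPositive A).mpr hA)
  have h : ∀ x y, innA A x y = inner ℂ (B x) (B y) := fun x y => by
    rw [innA, hB, mul_apply_eq_comp, ContinuousLinearMap.star_eq_adjoint,
      ContinuousLinearMap.adjoint_inner_left]
  refine ⟨B, h, fun x => ?_⟩
  rw [vnormA, h, ← RCLike.re_eq_complex_re, inner_self_eq_norm_sq, Real.sqrt_sq (norm_nonneg _)]

theorem re_innA_self {A : H →L[ℂ] H} (hA : A.IsPositive) (x : H) :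
    (innA A x x).re = vnormA A x ^ 2 := by
  obtain ⟨B, hB, hn⟩ := exists_innA_eq_inner hA
  rw [hn, hB, ← RCLike.re_eq_complex_re, inner_self_eq_norm_sq]

theorem norm_innA_le {A : H →L[ℂ] H} (hA : A.IsPositive) (x y : H) :
    ‖innA A x y‖ ≤ vnormA A x * vnormA A y := by
  obtain ⟨B, hB, hn⟩ := exists_innA_eq_inner hA
  rw [hn, hn, hB]
  exact norm_inner_le_norm _ _

theorem sq_re_innA_le {A : H →L[ℂ] H} (hA : A.IsPositive) (u v : H) :
    (innA A u v).re ^ 2 ≤ vnormA A v ^ 2 * vnormA A u ^ 2 := by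
  rw [← mul_pow, ← sq_abs, mul_comm (vnormA A v)]
  gcongr
  exact (Complex.abs_re_le_norm _).trans (norm_innA_le hA u v)

theorem norm_innA_le_vnormA {A T : H →L[ℂ] H} (hA : A.IsPositive) {x : H} (hx : vnormA A x = 1) :
    ‖innA A (T x) x‖ ≤ vnormA A (T x) := by
  simpa [hx] using norm_innA_le hA (T x) x

theorem vnormA_nonneg (A : H →L[ℂ] H) (x : H) : 0 ≤ vnormA A x := Real.sqrt_nonneg _

/-- The Buzano inequality. -/
theorem norm_inner_mul_inner_le (a b e : H) (he : ‖e‖ = 1) :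
    ‖(inner ℂ a e : ℂ)‖ * ‖(inner ℂ e b : ℂ)‖ ≤ (‖a‖ * ‖b‖ + ‖(inner ℂ a b : ℂ)‖) / 2 := by
  have h := norm_inner_le_norm (𝕜 := ℂ) a ((ℂ ∙ e).reflection b)
  rw [LinearIsometryEquiv.norm_map, Submodule.reflection_singleton_apply, he] at h
  have h2 : (2 : ℂ) * (inner ℂ a e * inner ℂ e b) =
      inner ℂ a (2 • (inner ℂ e b / ((1 : ℝ) : ℂ) ^ 2) • e - b) + inner ℂ a b := by
    simp [two_smul]
    ring
  have h3 := congrArg norm h2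
  rw [norm_mul, norm_mul, Complex.norm_two] at h3
  have h4 := norm_add_le (inner ℂ a (2 • (inner ℂ e b / ((1 : ℝ) : ℂ) ^ 2) • e - b) : ℂ)
    (inner ℂ a b)
  rw [← h3] at h4
  have h5 := h4.trans (add_le_add_left h _)
  linarith

theorem norm_innA_mul_innA_le {A : H →L[ℂ] H} (hA : A.IsPositive) (a b e : H)
    (he : vnormA A e = 1) :
    ‖innA A a e‖ * ‖innA A e b‖ ≤ (vnormA A a * vnormA A b + ‖innA A a b‖) / 2 := by
  obtain ⟨B, hB, hn⟩ := exists_innA_eq_inner hA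
  rw [hn] at he
  simp only [hB, hn]
  exact norm_inner_mul_inner_le _ _ _ he

theorem IsReducedAAdjoint.isAdjA {A T X : H →L[ℂ] H} (hA : A.IsPositive)
    (h : IsReducedAAdjoint A T X) : IsAdjA A T X := fun x y => by
  have h1 : A (X y) = adjoint T (A y) := congrArg (fun F : H →L[ℂ] H => F y) h.1
  calc innA A (T x) y = inner ℂ (T x) (A y) := hA.isSymmetric _ _
    _ = inner ℂ x (A (X y)) := by rw [h1, ContinuousLinearMap.adjoint_inner_right]
    _ = innA A x (X y) := (hA.isSymmetric _ _).symm

namespace IsAdjA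

variable {A T X T₁ X₁ : H →L[ℂ] H}

theorem symm (hA : A.IsPositive) (h : IsAdjA A T X) : IsAdjA A X T := fun x y => by
  rw [← innA_conj hA, ← h, innA_conj hA]

theorem mul (h : IsAdjA A T X) (h' : IsAdjA A T₁ X₁) : IsAdjA A (T * T₁) (X₁ * X) :=
  fun x y => by simp only [mul_apply_eq_comp]; rw [h, h']

theorem pow (h : IsAdjA A T X) (m : ℕ) : IsAdjA A (T ^ m) (X ^ m) := by
  induction m with
  | zero => intro x y; simp
  | succ m ih => rw [pow_succ, pow_succ']; exact ih.mul h

theorem add (h : IsAdjA A T X) (h' : IsAdjA A T₁ X₁) : IsAdjA A (T + T₁) (X + X₁) :=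
  fun x y => by
    have h1 := h x y
    have h2 := h' x y
    simp only [innA] at h1 h2
    simp [innA, h1, h2]

theorem sum {ι : Type*} (s : Finset ι) {T X : ι → H →L[ℂ] H} (h : ∀ i, IsAdjA A (T i) (X i)) :
    IsAdjA A (∑ i ∈ s, T i) (∑ i ∈ s, X i) := by
  classical
  induction s using Finset.induction_on with
  | empty => intro x y; simp [innA]
  | insert i s hi ih => rw [Finset.sum_insert hi, Finset.sum_insert hi]; exact (h i).add ih

theorem adj_mul_self (hA : A.IsPositive) (h : IsAdjA A T X) : IsAdjA A (X * T) (X * T) :=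
  (h.symm hA).mul h

theorem innA_pow_add (hA : A.IsPositive) (h : IsAdjA A T X) (i j : ℕ) (x : H) :
    innA A (((X * T) ^ (i + j)) x) x = innA A (((X * T) ^ i) x) (((X * T) ^ j) x) := by
  rw [add_comm, pow_add, mul_apply_eq_comp, ((h.adj_mul_self hA).pow j)]

theorem innA_pow_add_succ (hA : A.IsPositive) (h : IsAdjA A T X) (i j : ℕ) (x : H) :
    innA A (((X * T) ^ (i + 1 + j)) x) x =
      innA A (T (((X * T) ^ i) x)) (T (((X * T) ^ j) x)) := by
  rw [h.innA_pow_add hA, pow_succ', mul_apply_eq_comp, mul_apply_eq_comp,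
    h.symm hA]

theorem re_innA_pow_two_mul (hA : A.IsPositive) (h : IsAdjA A T X) (i : ℕ) (x : H) :
    (innA A (((X * T) ^ (2 * i)) x) x).re = vnormA A (((X * T) ^ i) x) ^ 2 := by
  rw [two_mul, h.innA_pow_add hA, re_innA_self hA]

theorem re_innA_pow_two_mul_add_one (hA : A.IsPositive) (h : IsAdjA A T X) (i : ℕ) (x : H) :
    (innA A (((X * T) ^ (2 * i + 1)) x) x).re = vnormA A (T (((X * T) ^ i) x)) ^ 2 := by
  rw [show 2 * i + 1 = i + 1 + i by ring, h.innA_pow_add_succ hA, re_innA_self hA]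

theorem re_innA_pow_nonneg (hA : A.IsPositive) (h : IsAdjA A T X) (j : ℕ) (x : H) :
    0 ≤ (innA A (((X * T) ^ j) x) x).re := by
  obtain ⟨i, rfl | rfl⟩ := j.even_or_odd'
  · rw [h.re_innA_pow_two_mul hA]; positivity
  · rw [h.re_innA_pow_two_mul_add_one hA]; positivity

/-- The moments of an `A`-positive operator are log-convex. -/
theorem sq_re_innA_pow_succ_le (hA : A.IsPositive) (h : IsAdjA A T X) (j : ℕ) (x : H) :
    (innA A (((X * T) ^ (j + 1)) x) x).re ^ 2 ≤
      (innA A (((X * T) ^ j) x) x).re * (innA A (((X * T) ^ (j + 2)) x) x).re := by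
  obtain ⟨i, rfl | rfl⟩ := j.even_or_odd'
  · rw [show 2 * i + 2 = 2 * (i + 1) by ring, h.re_innA_pow_two_mul hA, h.re_innA_pow_two_mul hA,
      show 2 * i + 1 = (i + 1) + i by ring, h.innA_pow_add hA]
    exact sq_re_innA_le hA _ _
  · rw [show 2 * i + 1 + 2 = 2 * (i + 1) + 1 by ring, h.re_innA_pow_two_mul_add_one hA,
      h.re_innA_pow_two_mul_add_one hA, show 2 * i + 1 + 1 = i + 1 + 1 + i by ring, h.innA_pow_add_succ hA]
    exact sq_re_innA_le hA _ _

theorem re_innA_mul_pow_le (hA : A.IsPositive) (h : IsAdjA A T X) {x : H} (hx : vnormA A x = 1)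
    (j : ℕ) :
    (innA A ((X * T) x) x).re * (innA A (((X * T) ^ j) x) x).re ≤
      (innA A (((X * T) ^ (j + 1)) x) x).re := by
  induction j with
  | zero => simp [re_innA_self hA, hx]
  | succ j ih =>
    have hc := h.sq_re_innA_pow_succ_le hA j x
    rcases (h.re_innA_pow_nonneg hA j x).eq_or_lt with h0 | h0
    · rw [← h0, zero_mul] at hc
      rw [pow_eq_zero_iff two_ne_zero |>.mp (le_antisymm hc (sq_nonneg _)), mul_zero]
      exact h.re_innA_pow_nonneg hA _ x
    · have h1 := mul_le_mul_of_nonneg_left ih (h.re_innA_pow_nonneg hA (j + 1) x)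
      refine le_of_mul_le_mul_left ?_ h0
      rw [add_assoc]
      linarith

/-- The McCarthy inequality for an `A`-positive operator and natural exponents. -/
theorem re_innA_pow_le (hA : A.IsPositive) (h : IsAdjA A T X) {x : H} (hx : vnormA A x = 1)
    (j : ℕ) :
    (innA A ((X * T) x) x).re ^ j ≤ (innA A (((X * T) ^ j) x) x).re := by
  induction j with
  | zero => simp [re_innA_self hA, hx]
  | succ j ih =>
    have h1 := h.re_innA_pow_nonneg hA 1 x
    rw [pow_one] at h1
    rw [pow_succ']
    exact (mul_le_mul_of_nonneg_left ih h1).trans (h.re_innA_mul_pow_le hA hx j)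

theorem re_innA_mul_self (hA : A.IsPositive) (h : IsAdjA A T X) (x : H) :
    (innA A ((X * T) x) x).re = vnormA A (T x) ^ 2 := by
  simpa using h.re_innA_pow_two_mul_add_one hA 0 x

theorem sq_vnormA_le (hA : A.IsPositive) (h : IsAdjA A T X) {x : H} (hx : vnormA A x = 1) :
    vnormA A (T x) ^ 2 ≤ ‖X * T‖ := by
  rw [← h.re_innA_mul_self hA]
  by_contra! hlt
  set m := (innA A ((X * T) x) x).re
  set p := ‖X * T‖
  have hp : 0 ≤ p := norm_nonneg _
  set C := ‖A‖ * ‖x‖ * ‖x‖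
  have hm : ∀ j : ℕ, m ^ j ≤ C * p ^ j := fun j => by
    refine (h.re_innA_pow_le hA hx j).trans ?_
    refine (Complex.re_le_norm _).trans ((norm_inner_le_norm _ _).trans ?_)
    have h1 : ‖((X * T) ^ j) x‖ ≤ p ^ j * ‖x‖ := by
      induction j with
      | zero => simp
      | succ j ih =>
        rw [pow_succ', pow_succ', mul_apply_eq_comp, mul_assoc]
        exact ((X * T).le_opNorm _).trans (mul_le_mul_of_nonneg_left ih hp)
    calc ‖A (((X * T) ^ j) x)‖ * ‖x‖ ≤ (‖A‖ * (p ^ j * ‖x‖)) * ‖x‖ := by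
          gcongr; exact (A.le_opNorm _).trans (by gcongr)
      _ = C * p ^ j := by ring
  rcases hp.eq_or_lt with h0 | h0
  · have := hm 1
    rw [← h0] at this hlt
    simp only [pow_one, mul_zero] at this
    linarith
  · obtain ⟨j, hj⟩ := pow_unbounded_of_one_lt C ((one_lt_div h0).mpr hlt)
    rw [div_pow, lt_div_iff₀ (by positivity)] at hj
    exact (hm j).not_gt hj

theorem vnormA_le_opNormA (hA : A.IsPositive) (h : IsAdjA A T X) {x : H} (hx : vnormA A x = 1) :
    vnormA A (T x) ≤ opNormA A T := by
  refine le_csSup ⟨√‖X * T‖, ?_⟩ ⟨x, hx, rfl⟩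
  rintro _ ⟨y, hy, rfl⟩
  exact Real.le_sqrt_of_sq_le (h.sq_vnormA_le hA hy)

theorem norm_innA_le_wA (hA : A.IsPositive) (h : IsAdjA A T X) {x : H} (hx : vnormA A x = 1) :
    ‖innA A (T x) x‖ ≤ wA A T := by
  refine le_csSup ⟨√‖X * T‖, ?_⟩ ⟨x, hx, rfl⟩
  rintro _ ⟨y, hy, rfl⟩
  exact (norm_innA_le_vnormA hA hy).trans (Real.le_sqrt_of_sq_le (h.sq_vnormA_le hA hy))

theorem sq_norm_innA_le (hA : A.IsPositive) (h : IsAdjA A T X) {x : H} (hx : vnormA A x = 1) :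
    ‖innA A (T x) x‖ ^ 2 ≤ (innA A ((X * T) x) x).re := by
  rw [h.re_innA_mul_self hA]
  gcongr
  exact norm_innA_le_vnormA hA hx

theorem norm_innA_pow_le (hA : A.IsPositive) (h : IsAdjA A T X) {x : H} (hx : vnormA A x = 1)
    (n : ℕ) :
    ‖innA A (T x) x‖ ^ (4 * n) ≤
      ((innA A (((X * T) ^ (2 * n) + (T * X) ^ (2 * n)) x) x).re +
        2 * wA A ((X * T) ^ n * (T * X) ^ n)) / 4 := by
  have hs := h.symm hA
  have hP := (h.adj_mul_self hA).pow n
  have hQ := (hs.adj_mul_self hA).pow n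
  have hnorm : ‖innA A (T x) x‖ = ‖innA A (X x) x‖ := by
    rw [h, ← innA_conj hA, RCLike.norm_conj]
  have h1 : ‖innA A (T x) x‖ ^ (2 * n) ≤ ‖innA A (((X * T) ^ n) x) x‖ := by
    rw [pow_mul]
    exact (pow_le_pow_left₀ (sq_nonneg _) (h.sq_norm_innA_le hA hx) n).trans
      ((h.re_innA_pow_le hA hx n).trans (Complex.re_le_norm _))
  have h2 : ‖innA A (T x) x‖ ^ (2 * n) ≤ ‖innA A x (((T * X) ^ n) x)‖ := by
    rw [hnorm, pow_mul, ← hQ]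
    exact (pow_le_pow_left₀ (sq_nonneg _) (hs.sq_norm_innA_le hA hx) n).trans
      ((hs.re_innA_pow_le hA hx n).trans (Complex.re_le_norm _))
  have h3 : ‖innA A (((X * T) ^ n) x) (((T * X) ^ n) x)‖ ≤ wA A ((X * T) ^ n * (T * X) ^ n) := by
    rw [hP, ← innA_conj hA, RCLike.norm_conj]
    exact (hP.mul hQ).norm_innA_le_wA hA hx
  have h4 := norm_innA_mul_innA_le hA (((X * T) ^ n) x) (((T * X) ^ n) x) x hx
  have h5 : (innA A (((X * T) ^ (2 * n) + (T * X) ^ (2 * n)) x) x).re =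
      vnormA A (((X * T) ^ n) x) ^ 2 + vnormA A (((T * X) ^ n) x) ^ 2 := by
    rw [← h.re_innA_pow_two_mul hA, ← hs.re_innA_pow_two_mul hA]
    simp [innA]
  have h6 := mul_le_mul h1 h2 (by positivity) (norm_nonneg _)
  rw [h5, show 4 * n = 2 * n + 2 * n by ring, pow_add]
  have h7 := two_mul_le_add_sq (vnormA A (((X * T) ^ n) x)) (vnormA A (((T * X) ^ n) x))
  linarith

end IsAdjA

theorem innA_sum_left {ι : Type*} (s : Finset ι) (A : H →L[ℂ] H) (T : ι → H →L[ℂ] H) (x y : H) :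
    innA A ((∑ i ∈ s, T i) x) y = ∑ i ∈ s, innA A (T i x) y := by
  simp [innA]

theorem wA_nonneg (A T : H →L[ℂ] H) : 0 ≤ wA A T :=
  Real.sSup_nonneg (by rintro _ ⟨x, -, rfl⟩; exact norm_nonneg _)

theorem opNormA_nonneg (A T : H →L[ℂ] H) : 0 ≤ opNormA A T :=
  Real.sSup_nonneg (by rintro _ ⟨x, -, rfl⟩; exact vnormA_nonneg A _)

theorem wA_pow_le {A T : H →L[ℂ] H} {m : ℕ} (hm : m ≠ 0) {R : ℝ} (hR : 0 ≤ R)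
    (h : ∀ x, vnormA A x = 1 → ‖innA A (T x) x‖ ^ m ≤ R) : wA A T ^ m ≤ R := by
  have h1 : wA A T ≤ R ^ ((m : ℝ)⁻¹) := by
    refine Real.sSup_le ?_ (by positivity)
    rintro _ ⟨x, hx, rfl⟩
    rw [← Real.pow_rpow_inv_natCast (norm_nonneg (innA A (T x) x)) hm]
    exact Real.rpow_le_rpow (by positivity) (h x hx) (by positivity)
  exact (pow_le_pow_left₀ (wA_nonneg A T) h1 m).trans_eq (Real.rpow_inv_natCast_pow hR hm)


theorem stmt12 (A : H →L[ℂ] H) (hA : A.IsPositive) (hA0 : A ≠ 0)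
    (k : ℕ) (hk : 1 ≤ k) (n : ℕ) (hn : 1 ≤ n)
    (S Ssharp : Fin k → (H →L[ℂ] H))
    (hS : ∀ i, IsReducedAAdjoint A (S i) (Ssharp i)) :
    wA A (∑ i, S i) ^ (4 * n) ≤
      ((k : ℝ) ^ (4 * n - 1) / 4) *
        (opNormA A (∑ i, ((Ssharp i * S i) ^ (2 * n) + (S i * Ssharp i) ^ (2 * n))) +
          2 * ∑ i, wA A ((Ssharp i * S i) ^ n * (S i * Ssharp i) ^ n)) := by
  have hadj := fun i => (hS i).isAdjA hA
  have hsum : IsAdjA A (∑ i, ((Ssharp i * S i) ^ (2 * n) + (S i * Ssharp i) ^ (2 * n)))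
      (∑ i, ((Ssharp i * S i) ^ (2 * n) + (S i * Ssharp i) ^ (2 * n))) :=
    IsAdjA.sum _ fun i => (((hadj i).adj_mul_self hA).pow _).add
      ((((hadj i).symm hA).adj_mul_self hA).pow _)
  have hw : 0 ≤ ∑ i, wA A ((Ssharp i * S i) ^ n * (S i * Ssharp i) ^ n) :=
    Finset.sum_nonneg fun i _ => wA_nonneg _ _
  have hop := opNormA_nonneg A (∑ i, ((Ssharp i * S i) ^ (2 * n) + (S i * Ssharp i) ^ (2 * n)))
  refine wA_pow_le (by omega) (by positivity) fun x hx => ?_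
  obtain ⟨p, hp⟩ : ∃ p, 4 * n = p + 1 := ⟨4 * n - 1, by omega⟩
  have hk0 : (0 : ℝ) < (k : ℝ) ^ p := by positivity
  have hmean := pow_sum_div_card_le_sum_pow (s := Finset.univ)
    (f := fun i => ‖innA A (S i x) x‖) (fun i _ => norm_nonneg _) p
  rw [Finset.card_univ, Fintype.card_fin, div_le_iff₀ hk0, ← hp] at hmean
  have hterm := Finset.sum_le_sum fun i (_ : i ∈ Finset.univ) =>
    (hadj i).norm_innA_pow_le hA hx n
  rw [← Finset.sum_div, Finset.sum_add_distrib, ← Finset.mul_sum, ← Complex.re_sum,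
    ← innA_sum_left] at hterm
  have hre := (Complex.re_le_norm _).trans
    ((norm_innA_le_vnormA hA hx).trans (hsum.vnormA_le_opNormA hA hx))
  rw [innA_sum_left, show 4 * n - 1 = p by omega]
  refine (pow_le_pow_left₀ (norm_nonneg _) (norm_sum_le _ _) _).trans (hmean.trans ?_)
  rw [mul_comm, div_mul_eq_mul_div, mul_div_assoc]
  gcongr
  exact hterm.trans (by gcongr)
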